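/- For every positive integer D, the full shift σ on the alphabet [0,1]^D, i.e. the map σ: ([0,1]^D)^ℤ → ([0,1]^D)^ℤ defined by σ((xₙ)_{n∈ℤ}) = (x_{n+1})_{n∈ℤ}, has mean dimension mdim(([0,1]^D)^ℤ, σ) = D. -/

import Mathlib

open Filter Set
open scoped ENNReal

namespace MeanDimPaper

variable {X : Type*} [TopologicalSpace X]

/-- `α` is an open cover of `X`. -/
def IsOpenCover (α : Set (Set X)) : Prop :=
  (∀ U ∈ α, IsOpen U) ∧ ⋃₀ α = Set.univ

/-- The order of a cover `α`: the maximum `n ≥ 0` such that there exist `n + 1`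
pairwise distinct members of `α` with nonempty common intersection. -/
noncomputable def ord (α : Set (Set X)) : ℕ∞ :=
  ⨆ n ∈ {n : ℕ | ∃ f : Fin (n + 1) → Set X,
      Function.Injective f ∧ (∀ i, f i ∈ α) ∧ (⋂ i, f i).Nonempty}, (n : ℕ∞)

/-- `β` refines `α`: every member of `β` is contained in some member of `α`. -/
def Refines (β α : Set (Set X)) : Prop := ∀ V ∈ β, ∃ U ∈ α, V ⊆ U

/-- `D(α)`: the minimum of `ord β` over open covers `β` refining `α`. -/
noncomputable def covD (α : Set (Set X)) : ℕ∞ :=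
  ⨅ β ∈ {β : Set (Set X) | IsOpenCover β ∧ Refines β α}, ord β

/-- Topological (covering) dimension: the supremum of `D(α)` over open covers `α`. -/
noncomputable def topDim (X : Type*) [TopologicalSpace X] : ℕ∞ :=
  ⨆ α ∈ {α : Set (Set X) | IsOpenCover α}, covD α

/-- Diameter of a set with respect to a distance function `d`. -/
noncomputable def diamD (d : X → X → ℝ) (U : Set X) : ℝ :=
  sSup {r | ∃ x ∈ U, ∃ y ∈ U, r = d x y}

/-- Mesh of a cover: the supremum of the diameters of its members. -/
noncomputable def mesh (d : X → X → ℝ) (α : Set (Set X)) : ℝ :=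
  sSup (diamD d '' α)

/-- `widim_ε(X, d)`: the minimum of `D(α)` over open covers `α` with `mesh(α, d) < ε`. -/
noncomputable def widim (ε : ℝ) (d : X → X → ℝ) : ℕ∞ :=
  ⨅ α ∈ {α : Set (Set X) | IsOpenCover α ∧ mesh d α < ε}, covD α

/-- `d` is a metric on `X` compatible with the topology of `X`. -/
structure IsCompatMetric {X : Type*} [TopologicalSpace X] (d : X → X → ℝ) : Prop where
  refl : ∀ x, d x x = 0
  eq_of : ∀ x y, d x y = 0 → x = y
  symm : ∀ x y, d x y = d y x
  triangle : ∀ x y z, d x z ≤ d x y + d y z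
  isOpen_iff : ∀ U : Set X, IsOpen U ↔ ∀ x ∈ U, ∃ ε > 0, ∀ y, d x y < ε → y ∈ U

/-- The dynamical distance `d_n(x, y) = max_{0 ≤ i < n} d(Tⁱ x, Tⁱ y)`. -/
noncomputable def dynDist (d : X → X → ℝ) (T : X → X) (n : ℕ) (x y : X) : ℝ :=
  sSup {r | ∃ i < n, r = d (T^[i] x) (T^[i] y)}

/-- Mean dimension `mdim(X, T)` computed with the metric `d`:
`lim_{ε → 0} lim_{n → ∞} widim_ε(X, d_n) / n`.  The inner limit exists (by
subadditivity of `n ↦ widim_ε(X, d_n)`) so it coincides with the liminf, and the inner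
quantity is monotone as `ε` decreases, so the limit as `ε → 0` is the supremum over
`ε > 0`. -/
noncomputable def mdim (T : X → X) (d : X → X → ℝ) : ℝ≥0∞ :=
  ⨆ (ε : ℝ) (_ : 0 < ε),
    Filter.liminf (fun n : ℕ => (widim ε (dynDist d T n) : ℝ≥0∞) / (n : ℝ≥0∞)) Filter.atTop

/-- The full shift `σ` on the alphabet `K`: `σ((xₙ)ₙ) = (xₙ₊₁)ₙ`. -/
def shift (K : Type*) : (ℤ → K) → ℤ → K := fun x n => x (n + 1)

/-!
For the lower bound, the cube `[0,1]^(nD)` embeds into the full shift through the coordinates at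
times `0, …, n - 1`, and a compatible metric keeps opposite faces at `d_n`-distance at least some
`ε` independent of `n`. By Lebesgue's covering theorem no cover of mesh less than `ε` has order less
than `nD`. Lebesgue's theorem comes from Kuhn's cubical Sperner lemma: label the grid points of the
cube by members of the cover, turn the labels into vectors, and add up modulo two the determinants
of all simplices of Kuhn's triangulation. Interior facets cancel in pairs, so the sum equals that
of one face of the cube and, by induction, is one; a simplex with nonzero determinant has pairwise
distinct labels.

For the upper bound, points whose coordinates at the times `-m, …, n + m - 1` are close are
`d_n`-close, with `m` independent of `n`. These `(n + 2m)D` coordinates map the full shift to a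
Euclidean space, where the open stars of a fine Freudenthal triangulation form a cover whose order
is at most the dimension. Dividing by `n` removes the contribution of `m`.
-/

section KuhnTriangulation

variable {n k : ℕ} {R : Type*} [CommRing R]

/-- The `j`-th vertex `p + e_{π j} + ⋯ + e_{π (n - 1)}` of the simplex with base `p` and
permutation `π` in Kuhn's triangulation of `ℝⁿ`. The order is decreasing from `p + (1, …, 1)` to
`p`, so that the facet opposite to vertex `0` lies in the hyperplane `x_{π 0} = p_{π 0}`. -/
def kuhnVertex (p : Fin n → ℕ) (π : Equiv.Perm (Fin n)) (j : ℕ) : Fin n → ℕ :=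
  fun i => p i + if j ≤ (π.symm i : ℕ) then 1 else 0

/-- The volume spanned by the images under `f` of the vertices of a Kuhn simplex. -/
def simplexDet (f : (Fin n → ℕ) → Fin n → R) (p : Fin n → ℕ) (π : Equiv.Perm (Fin n)) : R :=
  Matrix.det (Matrix.of fun a : Fin (n + 1) =>
    (Fin.cons 1 (f (kuhnVertex p π a)) : Fin (n + 1) → R))

/-- The contribution to `simplexDet` of the facet opposite to vertex `j`, up to sign. -/
def facetDet (f : (Fin n → ℕ) → Fin n → R) (p : Fin n → ℕ) (π : Equiv.Perm (Fin n))
    (j : Fin (n + 1)) : R :=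
  Matrix.det (Matrix.of fun a : Fin n => f (kuhnVertex p π (j.succAbove a)))

lemma simplexDet_eq_sum_facetDet [CharP R 2] (f : (Fin n → ℕ) → Fin n → R) (p : Fin n → ℕ)
    (π : Equiv.Perm (Fin n)) : simplexDet f p π = ∑ j, facetDet f p π j := by
  rw [simplexDet, Matrix.det_succ_column_zero]
  refine Finset.sum_congr rfl fun j _ => ?_
  simp only [CharTwo.neg_eq, one_pow, Matrix.of_apply, Fin.cons_zero, one_mul]
  rfl

lemma kuhnVertex_mul_swap (p : Fin (n + 1) → ℕ) (π : Equiv.Perm (Fin (n + 1))) (i : Fin n)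
    {j : ℕ} (hj : j ≠ i + 1) :
    kuhnVertex p (π * Equiv.swap i.castSucc i.succ) j = kuhnVertex p π j := by
  funext x
  have hsymm : (π * Equiv.swap i.castSucc i.succ).symm x =
      Equiv.swap i.castSucc i.succ (π.symm x) := by
    rw [Equiv.symm_apply_eq]; simp
  simp only [kuhnVertex, hsymm]
  congr 2
  rw [Equiv.swap_apply_def]
  split_ifs <;> simp_all <;> omega

lemma facetDet_mul_swap (f : (Fin (n + 1) → ℕ) → Fin (n + 1) → R) (p : Fin (n + 1) → ℕ)
    (π : Equiv.Perm (Fin (n + 1))) (i : Fin n) :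
    facetDet f p (π * Equiv.swap i.castSucc i.succ) i.castSucc.succ =
      facetDet f p π i.castSucc.succ := by
  unfold facetDet
  congr 2
  funext a
  refine congrArg f (kuhnVertex_mul_swap p π i fun h => ?_)
  exact Fin.succAbove_ne i.castSucc.succ a (Fin.ext (by simpa using h))

/-- An interior facet is shared by exactly two simplices of the same cube. -/
lemma sum_facetDet_interior_eq_zero [CharP R 2] (f : (Fin (n + 1) → ℕ) → Fin (n + 1) → R)
    (p : Fin (n + 1) → ℕ) (i : Fin n) : ∑ π, facetDet f p π i.castSucc.succ = 0 := by
  refine Finset.sum_involution (fun π _ => π * Equiv.swap i.castSucc i.succ) ?_ ?_ ?_ ?_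
  · intro π _
    rw [facetDet_mul_swap]
    exact CharTwo.add_self_eq_zero _
  · intro π _ _ hfixed
    have hswap : Equiv.swap i.castSucc i.succ = 1 := by simpa using hfixed
    exact i.castSucc_lt_succ.ne (Equiv.swap_eq_one_iff.1 hswap)
  · intros; simp
  · intros; simp [mul_assoc]

lemma kuhnVertex_succ_apply_zero (p : Fin (n + 1) → ℕ) (π : Equiv.Perm (Fin (n + 1))) (j : ℕ) :
    kuhnVertex p π (j + 1) (π 0) = p (π 0) := by
  simp [kuhnVertex]

lemma kuhnVertex_mul_finRotate (p : Fin (n + 1) → ℕ) (π : Equiv.Perm (Fin (n + 1))) {j : ℕ}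
    (hj : j ≤ n) :
    kuhnVertex p (π * finRotate (n + 1)) j = kuhnVertex (p + Pi.single (π 0) 1) π (j + 1) := by
  funext x
  obtain ⟨y, rfl⟩ := (π * finRotate (n + 1)).surjective x
  rw [kuhnVertex, Equiv.symm_apply_apply, Equiv.Perm.mul_apply]
  rcases Fin.eq_castSucc_or_eq_last y with ⟨z, rfl⟩ | rfl
  · simp [kuhnVertex]
  · simp [kuhnVertex, hj]

lemma facetDet_mul_finRotate_last (f : (Fin (n + 1) → ℕ) → Fin (n + 1) → R)
    (p : Fin (n + 1) → ℕ) (π : Equiv.Perm (Fin (n + 1))) :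
    facetDet f p (π * finRotate (n + 1)) (Fin.last _) =
      facetDet f (p + Pi.single (π 0) 1) π 0 := by
  unfold facetDet
  congr 2
  funext a
  rw [Fin.succAbove_last, Fin.zero_succAbove, Fin.val_castSucc, Fin.val_succ,
    kuhnVertex_mul_finRotate p π (Nat.lt_succ_iff.1 a.2)]

lemma sum_perm_simplexDet [CharP R 2] (f : (Fin (n + 1) → ℕ) → Fin (n + 1) → R)
    (p : Fin (n + 1) → ℕ) :
    ∑ π, simplexDet f p π =
      ∑ π : Equiv.Perm (Fin (n + 1)),
        (facetDet f (p + Pi.single (π 0) 1) π 0 - facetDet f p π 0) := by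
  have hlast : ∑ π, facetDet f p π (Fin.last _) =
      ∑ π : Equiv.Perm (Fin (n + 1)), facetDet f (p + Pi.single (π 0) 1) π 0 := by
    rw [← Equiv.sum_comp (Equiv.mulRight (finRotate (n + 1)))]
    exact Finset.sum_congr rfl fun π _ => facetDet_mul_finRotate_last f p π
  simp only [simplexDet_eq_sum_facetDet, CharTwo.sub_eq_add, Finset.sum_add_distrib, ← hlast]
  rw [Finset.sum_comm, Fin.sum_univ_succ, Fin.sum_univ_castSucc]
  simp only [sum_facetDet_interior_eq_zero, Finset.sum_const_zero, zero_add, Fin.succ_last]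
  exact add_comm _ _

lemma insertNth_add_single (i : Fin (n + 1)) (c : ℕ) (q : Fin n → ℕ) :
    (i.insertNth c q : Fin (n + 1) → ℕ) + Pi.single i 1 = i.insertNth (c + 1) q := by
  funext x
  refine Fin.succAboveCases i ?_ (fun j => ?_) x <;> simp

lemma sum_piFinset_range_sub {M : Type*} [AddCommGroup M] (F : (Fin (n + 1) → ℕ) → M)
    (i : Fin (n + 1)) :
    ∑ p ∈ Fintype.piFinset fun _ => Finset.range k, (F (p + Pi.single i 1) - F p) =
      ∑ q ∈ Fintype.piFinset fun _ => Finset.range k,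
        (F (i.insertNth k q) - F (i.insertNth 0 q)) := by
  have hbox := Finset.filter_piFinset_eq_map_insertNthEquiv (p := i)
    (fun _ : Fin (n + 1) => Finset.range k) fun _ => True
  simp only [Finset.filter_true] at hbox
  rw [hbox, Finset.sum_map, Finset.sum_product_right]
  refine Finset.sum_congr rfl fun q _ => ?_
  calc
    _ = ∑ c ∈ Finset.range k, (F ((i.insertNth c q : Fin (n + 1) → ℕ) + Pi.single i 1) -
          F (i.insertNth c q)) := rfl
    _ = ∑ c ∈ Finset.range k, (F (i.insertNth (c + 1) q) - F (i.insertNth c q)) := by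
      simp only [insertNth_add_single]
    _ = _ := Finset.sum_range_sub (fun c => F (i.insertNth c q)) k

/-- Facets inside the box `[0, k]ⁿ⁺¹` cancel in characteristic two; only those on the faces
`x_{π 0} = k` and `x_{π 0} = 0` survive. -/
lemma sum_simplexDet_eq_sum_boundary [CharP R 2] (f : (Fin (n + 1) → ℕ) → Fin (n + 1) → R) :
    ∑ p ∈ Fintype.piFinset fun _ => Finset.range k, ∑ π, simplexDet f p π =
      ∑ π : Equiv.Perm (Fin (n + 1)), ∑ q ∈ Fintype.piFinset fun _ => Finset.range k,
        (facetDet f ((π 0).insertNth k q) π 0 - facetDet f ((π 0).insertNth 0 q) π 0) := by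
  simp only [sum_perm_simplexDet]
  rw [Finset.sum_comm]
  exact Finset.sum_congr rfl fun π _ => sum_piFinset_range_sub (fun p => facetDet f p π 0) (π 0)

/-- A vector labelling of the lattice points of `[0, k]ⁿ` satisfying Kuhn's boundary conditions.
A label stands for a vertex of the standard `n`-simplex in its first `n` barycentric coordinates:
on the face `x_i = k` its `i`-th coordinate vanishes, and on the face `x_i = 0` it is supported on
the coordinates `≥ i` and has total weight one. -/
structure IsKuhnLabelling (k : ℕ) (f : (Fin n → ℕ) → Fin n → R) : Prop where
  eq_zero_of_eq_top : ∀ p, (∀ i, p i ≤ k) → ∀ i, p i = k → f p i = 0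
  eq_zero_of_lt : ∀ p, (∀ i, p i ≤ k) → ∀ i, p i = 0 → ∀ j < i, f p j = 0
  sum_eq_one : ∀ p, (∀ i, p i ≤ k) → ∀ i, p i = 0 → ∑ j, f p j = 1

lemma IsKuhnLabelling.comp_cons {f : (Fin (n + 1) → ℕ) → Fin (n + 1) → R}
    (hf : IsKuhnLabelling k f) :
    IsKuhnLabelling k fun q (j : Fin n) => f (Fin.cons 0 q) j.succ := by
  have hcons {q : Fin n → ℕ} (hq : ∀ i, q i ≤ k) (i) : (Fin.cons 0 q : Fin (n + 1) → ℕ) i ≤ k :=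
    Fin.cases (Nat.zero_le k) hq i
  refine ⟨fun q hq i hi => hf.eq_zero_of_eq_top _ (hcons hq) i.succ hi,
    fun q hq i hi j hj =>
      hf.eq_zero_of_lt _ (hcons hq) i.succ hi j.succ (Fin.succ_lt_succ_iff.2 hj),
    fun q hq i hi => ?_⟩
  have hsum := hf.sum_eq_one _ (hcons hq) i.succ hi
  rwa [Fin.sum_univ_succ, hf.eq_zero_of_lt _ (hcons hq) i.succ hi 0 i.succ_pos, zero_add] at hsum

lemma kuhnVertex_insertNth_le (π : Equiv.Perm (Fin (n + 1))) {c : ℕ} (hc : c ≤ k)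
    {q : Fin n → ℕ} (hq : ∀ i, q i < k) (j : ℕ) (i : Fin (n + 1)) :
    kuhnVertex ((π 0).insertNth c q) π (j + 1) i ≤ k := by
  refine Fin.succAboveCases (π 0) ?_ (fun i => ?_) i
  · simpa [kuhnVertex_succ_apply_zero] using hc
  · have := hq i
    simp only [kuhnVertex, Fin.insertNth_apply_succAbove]
    split_ifs <;> omega

lemma kuhnVertex_insertNth_apply_zero (π : Equiv.Perm (Fin (n + 1))) (c : ℕ) (q : Fin n → ℕ)
    (j : ℕ) : kuhnVertex ((π 0).insertNth c q) π (j + 1) (π 0) = c := by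
  rw [kuhnVertex_succ_apply_zero, Fin.insertNth_apply_same]

lemma IsKuhnLabelling.facetDet_top_eq_zero {f : (Fin (n + 1) → ℕ) → Fin (n + 1) → R}
    (hf : IsKuhnLabelling k f) (π : Equiv.Perm (Fin (n + 1))) {q : Fin n → ℕ}
    (hq : ∀ i, q i < k) : facetDet f ((π 0).insertNth k q) π 0 = 0 :=
  Matrix.det_eq_zero_of_column_eq_zero (π 0) fun a =>
    hf.eq_zero_of_eq_top _ (kuhnVertex_insertNth_le π le_rfl hq a) _
      (kuhnVertex_insertNth_apply_zero π k q a)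

lemma IsKuhnLabelling.facetDet_bottom_eq_zero {f : (Fin (n + 1) → ℕ) → Fin (n + 1) → R}
    (hf : IsKuhnLabelling k f) {π : Equiv.Perm (Fin (n + 1))} (hπ : π 0 ≠ 0) {q : Fin n → ℕ}
    (hq : ∀ i, q i < k) : facetDet f ((π 0).insertNth 0 q) π 0 = 0 :=
  Matrix.det_eq_zero_of_column_eq_zero 0 fun a =>
    hf.eq_zero_of_lt _ (kuhnVertex_insertNth_le π k.zero_le hq a) (π 0)
      (kuhnVertex_insertNth_apply_zero π 0 q a) 0 (Fin.pos_of_ne_zero hπ)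

lemma kuhnVertex_cons_decomposeFin (q : Fin n → ℕ) (σ : Equiv.Perm (Fin n)) (j : ℕ) :
    kuhnVertex (Fin.cons 0 q) (Equiv.Perm.decomposeFin.symm (0, σ)) (j + 1) =
      Fin.cons 0 (kuhnVertex q σ j) := by
  funext x
  refine Fin.cases ?_ (fun y => ?_) x
  · simpa using kuhnVertex_succ_apply_zero (Fin.cons 0 q)
      (Equiv.Perm.decomposeFin.symm ((0 : Fin (n + 1)), σ)) j
  · have hsymm : (Equiv.Perm.decomposeFin.symm ((0 : Fin (n + 1)), σ)).symm y.succ =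
        (σ.symm y).succ := by
      rw [Equiv.symm_apply_eq]; simp
    simp [kuhnVertex, hsymm]

/-- Adding all columns to the first one turns the facet determinant into the simplex determinant of
the face. -/
lemma IsKuhnLabelling.facetDet_bottom_eq_simplexDet {f : (Fin (n + 1) → ℕ) → Fin (n + 1) → R}
    (hf : IsKuhnLabelling k f) (σ : Equiv.Perm (Fin n)) {q : Fin n → ℕ} (hq : ∀ i, q i < k) :
    facetDet f (Fin.cons 0 q) (Equiv.Perm.decomposeFin.symm (0, σ)) 0 =
      simplexDet (fun q j => f (Fin.cons 0 q) j.succ) q σ := by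
  have hrow (a : Fin (n + 1)) : ∑ b, f (Fin.cons 0 (kuhnVertex q σ a)) b = 1 := by
    refine hf.sum_eq_one _ (fun i => Fin.cases k.zero_le (fun i => ?_) i) 0 rfl
    have := hq i
    simp only [Fin.cons_succ, kuhnVertex]
    split_ifs <;> omega
  have hcol := Matrix.det_updateCol_sum (Matrix.of fun a b : Fin (n + 1) =>
    f (Fin.cons 0 (kuhnVertex q σ a)) b) 0 1
  simp only [Pi.one_apply, one_smul] at hcol
  simp only [facetDet, Fin.zero_succAbove, Fin.val_succ, kuhnVertex_cons_decomposeFin]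
  refine hcol.symm.trans ?_
  rw [simplexDet]
  congr 1
  ext a b
  refine Fin.cases ?_ (fun c => ?_) b
  · simpa using hrow a
  · simp

theorem IsKuhnLabelling.sum_simplexDet_eq_one [CharP R 2] {f : (Fin n → ℕ) → Fin n → R}
    (hf : IsKuhnLabelling k f) :
    ∑ p ∈ Fintype.piFinset fun _ => Finset.range k, ∑ π, simplexDet f p π = 1 := by
  induction n with
  | zero => simp [simplexDet]
  | succ n ih =>
    have hsurvives : ∀ π : Equiv.Perm (Fin (n + 1)),
        ∀ q ∈ Fintype.piFinset fun _ : Fin n => Finset.range k,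
        facetDet f ((π 0).insertNth k q) π 0 - facetDet f ((π 0).insertNth 0 q) π 0 =
          if π 0 = 0 then facetDet f (Fin.cons 0 q) π 0 else 0 := by
      intro π q hq
      have hlt : ∀ i, q i < k := by simpa using hq
      rw [hf.facetDet_top_eq_zero π hlt, CharTwo.sub_eq_add, zero_add]
      split_ifs with hπ
      · rw [hπ, Fin.insertNth_zero']
      · exact hf.facetDet_bottom_eq_zero hπ hlt
    rw [sum_simplexDet_eq_sum_boundary,
      Finset.sum_congr rfl fun π _ => Finset.sum_congr rfl (hsurvives π),
      ← Equiv.Perm.decomposeFin.symm.sum_comp, Fintype.sum_prod_type,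
      Fintype.sum_eq_single 0 fun i hi => by simp [hi], ← ih hf.comp_cons, Finset.sum_comm]
    refine Finset.sum_congr rfl fun q hq => Finset.sum_congr rfl fun σ _ => ?_
    simpa using hf.facetDet_bottom_eq_simplexDet σ (by simpa using hq)

/-- The standard basis vector at the largest element of `s`, or zero if `s` is empty. -/
def singleMax (R : Type*) [Zero R] [One R] (s : Finset (Fin n)) : Fin n → R :=
  if hs : s.Nonempty then Pi.single (s.max' hs) 1 else 0

lemma singleMax_apply_of_notMem {R : Type*} [Zero R] [One R] {s : Finset (Fin n)}
    {i : Fin n} (hi : i ∉ s) : singleMax R s i = 0 := by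
  unfold singleMax
  split_ifs with hs
  · exact Pi.single_eq_of_ne (ne_of_mem_of_not_mem (s.max'_mem hs) hi).symm _
  · rfl

lemma singleMax_of_mem {R : Type*} [Zero R] [One R] {s : Finset (Fin n)} {i : Fin n}
    (hi : i ∈ s) : ∃ m, i ≤ m ∧ singleMax R s = Pi.single m 1 :=
  ⟨s.max' ⟨i, hi⟩, s.le_max' i hi, dif_pos ⟨i, hi⟩⟩

/-- Kuhn's cubical Sperner lemma. -/
theorem exists_injective_kuhnVertex {A : Type*} (l : (Fin n → ℕ) → A) (S : A → Finset (Fin n))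
    (htop : ∀ p, (∀ i, p i ≤ k) → ∀ i, p i = k → i ∉ S (l p))
    (hbot : ∀ p, (∀ i, p i ≤ k) → ∀ i, p i = 0 → i ∈ S (l p)) :
    ∃ (p : Fin n → ℕ) (π : Equiv.Perm (Fin n)),
      Function.Injective fun j : Fin (n + 1) => l (kuhnVertex p π j) := by
  have hf : IsKuhnLabelling k fun p => singleMax (ZMod 2) (S (l p)) := by
    refine ⟨fun p hp i hi => singleMax_apply_of_notMem (htop p hp i hi),
      fun p hp i hi j hj => ?_, fun p hp i hi => ?_⟩ <;>
    obtain ⟨m, him, hm⟩ := singleMax_of_mem (R := ZMod 2) (hbot p hp i hi)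
    · rw [hm, Pi.single_eq_of_ne (hj.trans_le him).ne]
    · simp [hm]
  obtain ⟨p, -, hp⟩ := Finset.exists_ne_zero_of_sum_ne_zero
    (hf.sum_simplexDet_eq_one.trans_ne one_ne_zero)
  obtain ⟨π, -, hπ⟩ := Finset.exists_ne_zero_of_sum_ne_zero hp
  refine ⟨p, π, fun a b hab => ?_⟩
  by_contra hne
  refine hπ (Matrix.det_zero_of_row_eq hne ?_)
  funext c
  simp only [Matrix.of_apply, show l (kuhnVertex p π a) = l (kuhnVertex p π b) from hab]

end KuhnTriangulation

section Covers

variable {Y : Type*}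

lemma IsOpenCover.preimage [TopologicalSpace Y] {β : Set (Set X)} (hβ : IsOpenCover β) {f : Y → X}
    (hf : Continuous f) : IsOpenCover ((f ⁻¹' ·) '' β) := by
  refine ⟨forall_mem_image.2 fun V hV => (hβ.1 V hV).preimage hf, ?_⟩
  rw [sUnion_image, ← preimage_iUnion₂, ← sUnion_eq_biUnion, hβ.2, preimage_univ]

lemma covD_le_ord {α : Set (Set X)} (hα : IsOpenCover α) : covD α ≤ ord α :=
  iInf₂_le α ⟨hα, fun V hV => ⟨V, hV, Subset.rfl⟩⟩

lemma le_ord_of_injective {α : Set (Set Y)} {n : ℕ} {f : Fin (n + 1) → Set Y}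
    (hf : Function.Injective f) (hα : ∀ i, f i ∈ α) {y : Y} (hy : ∀ i, y ∈ f i) :
    (n : ℕ∞) ≤ ord α :=
  le_iSup₂_of_le n ⟨f, hf, hα, y, mem_iInter.2 hy⟩ le_rfl

lemma ord_preimage_le {Z : Type*} (f : Z → Y) (β : Set (Set Y)) :
    ord ((f ⁻¹' ·) '' β) ≤ ord β := by
  refine iSup₂_le fun n ⟨g, hg, hgβ, z, hz⟩ => ?_
  choose V hV hVg using hgβ
  refine le_ord_of_injective (f := V) (fun i j hij => hg ?_) hV (y := f z) fun i => ?_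
  · rw [← hVg, ← hVg, hij]
  · exact (hVg i).ge (mem_iInter.1 hz i)

lemma dist_le_mesh {d : Y → Y → ℝ} {C : ℝ} (hC : ∀ x y, d x y ≤ C) {α : Set (Set Y)}
    {V : Set Y} (hV : V ∈ α) {x y : Y} (hx : x ∈ V) (hy : y ∈ V) : d x y ≤ mesh d α := by
  have hdiam : d x y ≤ diamD d V := by
    refine le_csSup ⟨C, ?_⟩ ⟨x, hx, y, hy, rfl⟩
    rintro _ ⟨a, -, b, -, rfl⟩
    exact hC a b
  refine hdiam.trans (le_csSup ⟨max C 0, forall_mem_image.2 fun W _ => ?_⟩ ⟨V, hV, rfl⟩)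
  refine Real.sSup_le ?_ (le_max_right C 0)
  rintro _ ⟨a, -, b, -, rfl⟩
  exact le_max_of_le_left (hC a b)

lemma mesh_le {d : Y → Y → ℝ} {C : ℝ} (hC : 0 ≤ C) {α : Set (Set Y)}
    (h : ∀ V ∈ α, ∀ x ∈ V, ∀ y ∈ V, d x y ≤ C) : mesh d α ≤ C := by
  refine Real.sSup_le (forall_mem_image.2 fun V hV => Real.sSup_le ?_ hC) hC
  rintro _ ⟨x, hx, y, hy, rfl⟩
  exact h V hV x hx y hy

end Covers

section LebesgueCovering

variable {n : ℕ}

/-- The point `p / k` of the unit cube, truncated to the cube when `p` leaves `[0, k]ⁿ`. -/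
noncomputable def gridPoint (k : ℕ) (p : Fin n → ℕ) : Fin n → unitInterval :=
  fun i => projIcc 0 1 zero_le_one ((p i : ℝ) / k)

lemma dist_gridPoint_kuhnVertex_le (k : ℕ) (p : Fin n → ℕ) (π : Equiv.Perm (Fin n)) (j : ℕ) :
    dist (gridPoint k (kuhnVertex p π j)) (gridPoint k p) ≤ 1 / k := by
  refine (dist_pi_le_iff (by positivity)).2 fun i => (abs_projIcc_sub_projIcc zero_le_one).trans ?_
  rw [← sub_div, abs_div, Nat.abs_cast]
  gcongr
  unfold kuhnVertex
  split_ifs <;> simp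

lemma gridPoint_eq_zero (k : ℕ) {p : Fin n → ℕ} {i : Fin n} (hi : p i = 0) :
    gridPoint k p i = 0 := by
  simp [gridPoint, hi]

lemma gridPoint_eq_one {k : ℕ} (hk : k ≠ 0) {p : Fin n → ℕ} {i : Fin n} (hi : p i = k) :
    gridPoint k p i = 1 := by
  simp [gridPoint, hi, hk]

lemma natCast_le_ord_of_separates_faces {β : Set (Set (Fin n → unitInterval))}
    (hβ : IsOpenCover β) (hsep : ∀ V ∈ β, ∀ x ∈ V, ∀ y ∈ V, ∀ i, x i = 0 → y i ≠ 1) :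
    (n : ℕ∞) ≤ ord β := by
  classical
  obtain ⟨δ, hδ, hball⟩ :=
    lebesgue_number_lemma_of_metric_sUnion isCompact_univ hβ.1 hβ.2.symm.subset
  obtain ⟨k, hk⟩ := exists_nat_one_div_lt hδ
  choose l hlβ hl using fun p : Fin n → ℕ => hball (gridPoint (k + 1) p) (mem_univ _)
  have hself p : gridPoint (k + 1) p ∈ l p := hl p (Metric.mem_ball_self hδ)
  obtain ⟨p, π, hinj⟩ := exists_injective_kuhnVertex (k := k + 1) l
    (fun V => {i | ∀ y ∈ V, y i ≠ 1})
    (fun p _ i hi hmem =>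
      (Finset.mem_filter.1 hmem).2 _ (hself p) (gridPoint_eq_one k.succ_ne_zero hi))
    (fun p _ i hi => by
      simpa using fun y hy => hsep _ (hlβ p) _ (hself p) y hy i (gridPoint_eq_zero _ hi))
  refine le_ord_of_injective hinj (fun j => hlβ _) (y := gridPoint (k + 1) p) fun j => hl _ ?_
  rw [Metric.mem_ball']
  exact (dist_gridPoint_kuhnVertex_le (k + 1) p π j).trans_lt (by exact_mod_cast hk)

/-- Lebesgue's covering theorem. -/
theorem card_le_ord_of_separates_faces {ι : Type*} [Fintype ι] {β : Set (Set (ι → unitInterval))}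
    (hβ : IsOpenCover β) (hsep : ∀ V ∈ β, ∀ x ∈ V, ∀ y ∈ V, ∀ i, x i = 0 → y i ≠ 1) :
    (Fintype.card ι : ℕ∞) ≤ ord β := by
  let reindex (x : Fin (Fintype.card ι) → unitInterval) : ι → unitInterval :=
    x ∘ Fintype.equivFin ι
  have hreindex : Continuous reindex := by fun_prop
  refine (natCast_le_ord_of_separates_faces (hβ.preimage hreindex) ?_).trans
    (ord_preimage_le reindex β)
  refine forall_mem_image.2 fun V hV x hx y hy i => ?_
  simpa [reindex] using hsep V hV _ hx _ hy ((Fintype.equivFin ι).symm i)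

theorem card_le_widim {ι : Type*} [Fintype ι] {d : X → X → ℝ} {C ε : ℝ} (hC : ∀ x y, d x y ≤ C)
    {E : (ι → unitInterval) → X} (hE : Continuous E)
    (hfar : ∀ x y i, x i = 0 → y i = 1 → ε ≤ d (E x) (E y)) :
    (Fintype.card ι : ℕ∞) ≤ widim ε d := by
  refine le_iInf₂ fun α ⟨_, hmesh⟩ => le_iInf₂ fun β ⟨hβ, hβα⟩ => ?_
  refine (card_le_ord_of_separates_faces (hβ.preimage hE) ?_).trans (ord_preimage_le E β)
  refine forall_mem_image.2 fun V hV x hx y hy i hx0 hy1 => ?_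
  obtain ⟨U, hU, hVU⟩ := hβα V hV
  exact (hfar x y i hx0 hy1).not_gt ((dist_le_mesh hC hU (hVU hx) (hVU hy)).trans_lt hmesh)

end LebesgueCovering

section FreudenthalStars

variable {ι : Type*}

/-- The open star of the lattice point `v` in Freudenthal's triangulation of `ℝ^ι`, described as
the union of the translates of the open cube `v + (0, 1)^ι` by `-(t, …, t)` for `0 < t < 1`. -/
def openStar (v : ι → ℤ) : Set (ι → ℝ) :=
  {x | ∃ t ∈ Ioo (0 : ℝ) 1, ∀ i, x i + t ∈ Ioo (v i : ℝ) (v i + 1)}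

lemma isOpen_openStar [Finite ι] (v : ι → ℤ) : IsOpen (openStar v) := by
  have hunion : openStar v =
      ⋃ t ∈ Ioo (0 : ℝ) 1, ⋂ i, (fun x : ι → ℝ => x i + t) ⁻¹' Ioo (v i : ℝ) (v i + 1) := by
    ext x
    simp [openStar]
  rw [hunion]
  exact isOpen_biUnion fun t _ => isOpen_iInter_of_finite fun i =>
    isOpen_Ioo.preimage (by fun_prop)

lemma exists_mem_openStar [Countable ι] (x : ι → ℝ) : ∃ v, x ∈ openStar v := by
  have hcount : (⋃ i, range fun z : ℤ => (z : ℝ) - x i).Countable :=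
    countable_iUnion fun i => countable_range _
  obtain ⟨t, htn, ht⟩ := (hcount.dense_compl ℝ).exists_between zero_lt_one
  refine ⟨fun i => ⌊x i + t⌋, t, ht, fun i => ⟨?_, Int.lt_floor_add_one _⟩⟩
  refine (Int.floor_le _).lt_of_ne fun hint => htn (mem_iUnion.2 ⟨i, ⌊x i + t⌋, ?_⟩)
  exact sub_eq_of_eq_add' hint

lemma isOpenCover_range_openStar [Finite ι] :
    IsOpenCover (range (openStar : (ι → ℤ) → Set (ι → ℝ))) :=
  ⟨forall_mem_range.2 isOpen_openStar, eq_univ_of_forall fun x =>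
    let ⟨v, hv⟩ := exists_mem_openStar x; ⟨_, mem_range_self v, hv⟩⟩

/-- The coordinate sum is injective on a chain. -/
lemma card_le_card_add_one_of_forall_le_or_ge [Fintype ι] {κ : Type*} [Fintype κ] {w : ι → ℤ}
    {v : κ → ι → ℤ} (hinj : Function.Injective v) (hchain : ∀ a b, v a ≤ v b ∨ v b ≤ v a)
    (hmem : ∀ a, v a ∈ Icc w (w + 1)) : Fintype.card κ ≤ Fintype.card ι + 1 := by
  have hsum : Function.Injective fun a => ∑ i, v a i := by
    intro a b hab
    by_contra hne
    rcases hchain a b with h | h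
    · exact (Fintype.sum_strictMono (h.lt_of_ne (hinj.ne hne))).ne hab
    · exact (Fintype.sum_strictMono (h.lt_of_ne (hinj.ne hne).symm)).ne' hab
  have hrange : ∀ a ∈ Finset.univ,
      ∑ i, v a i ∈ Finset.Icc (∑ i, w i) (∑ i, w i + Fintype.card ι) := by
    intro a _
    rw [Finset.mem_Icc]
    refine ⟨Fintype.sum_mono (hmem a).1, (Fintype.sum_mono (hmem a).2).trans_eq ?_⟩
    simp [Finset.sum_add_distrib]
  have hcard := Finset.card_le_card_of_injOn _ hrange hsum.injOn
  rw [Finset.card_univ, Int.card_Icc] at hcard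
  omega

lemma ord_range_openStar_le [Fintype ι] :
    ord (range (openStar : (ι → ℤ) → Set (ι → ℝ))) ≤ (Fintype.card ι : ℕ∞) := by
  refine iSup₂_le fun n ⟨f, hf, hmem, x, hx⟩ => ?_
  choose v hv using hmem
  have hxv a : x ∈ openStar (v a) := by
    rw [hv]
    exact mem_iInter.1 hx a
  choose t ht hxt using hxv
  have hfloor a i : v a i = ⌊x i + t a⌋ :=
    (Int.floor_eq_iff.2 ⟨(hxt a i).1.le, (hxt a i).2⟩).symm
  have hmono {a b} (hab : t a ≤ t b) : v a ≤ v b := fun i => by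
    rw [hfloor, hfloor]
    gcongr
  have hbound a : v a ∈ Icc (fun i => ⌊x i⌋) ((fun i => ⌊x i⌋) + 1) := by
    refine ⟨fun i => ?_, fun i => ?_⟩
    · rw [hfloor]
      exact Int.floor_mono (by linarith [(ht a).1])
    · rw [hfloor, Pi.add_apply, Pi.one_apply, ← Int.floor_add_one]
      exact Int.floor_mono (by linarith [(ht a).2])
  have hcard := card_le_card_add_one_of_forall_le_or_ge
    (fun a b hab => hf (by rw [← hv, ← hv, hab]))
    (fun a b => (le_total (t a) (t b)).imp hmono hmono) hbound
  rw [Fintype.card_fin] at hcard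
  exact_mod_cast Nat.le_of_succ_le_succ hcard

lemma abs_sub_lt_two_of_mem_openStar {v : ι → ℤ} {x y : ι → ℝ} (hx : x ∈ openStar v)
    (hy : y ∈ openStar v) (i : ι) : |x i - y i| < 2 := by
  obtain ⟨s, ⟨hs0, hs1⟩, hs⟩ := hx
  obtain ⟨t, ⟨ht0, ht1⟩, ht⟩ := hy
  obtain ⟨hsl, hsu⟩ := hs i
  obtain ⟨htl, htu⟩ := ht i
  rw [abs_lt]
  constructor <;> linarith

theorem widim_le_card [Fintype ι] {d : X → X → ℝ} {δ ε : ℝ} (hδ : 0 ≤ δ) (hδε : δ < ε)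
    {F : X → ι → ℝ} (hF : Continuous F)
    (hclose : ∀ x y, (∀ i, |F x i - F y i| < 2) → d x y ≤ δ) :
    widim ε d ≤ (Fintype.card ι : ℕ∞) := by
  have hcover := (isOpenCover_range_openStar (ι := ι)).preimage hF
  have hmesh : mesh d ((F ⁻¹' ·) '' range openStar) ≤ δ := by
    refine mesh_le hδ (forall_mem_image.2 (forall_mem_range.2 fun v x hx y hy => ?_))
    exact hclose x y (abs_sub_lt_two_of_mem_openStar hx hy)
  calc
    widim ε d ≤ covD ((F ⁻¹' ·) '' range openStar) := iInf₂_le _ ⟨hcover, hmesh.trans_lt hδε⟩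
    _ ≤ ord ((F ⁻¹' ·) '' range openStar) := covD_le_ord hcover
    _ ≤ ord (range openStar) := ord_preimage_le F _
    _ ≤ Fintype.card ι := ord_range_openStar_le

end FreudenthalStars

section CompatibleMetrics

open scoped Topology Uniformity

variable {d : X → X → ℝ}

lemma IsCompatMetric.continuous (hd : IsCompatMetric d) :
    Continuous fun p : X × X => d p.1 p.2 := by
  let _ := PseudoMetricSpace.ofDistTopology d hd.refl hd.symm hd.triangle hd.isOpen_iff
  exact continuous_dist

lemma IsCompatMetric.exists_forall_le [CompactSpace X] (hd : IsCompatMetric d) :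
    ∃ C, ∀ x y, d x y ≤ C := by
  obtain ⟨C, hC⟩ := (isCompact_range hd.continuous).bddAbove
  exact ⟨C, fun x y => hC ⟨(x, y), rfl⟩⟩

lemma IsCompatMetric.hasBasis_nhdsSet_diagonal [CompactSpace X] (hd : IsCompatMetric d) :
    (𝓝ˢ (diagonal X)).HasBasis (fun ε : ℝ => 0 < ε) fun ε => {p | d p.1 p.2 < ε} := by
  let _ := PseudoMetricSpace.ofDistTopology d hd.refl hd.symm hd.triangle hd.isOpen_iff
  rw [nhdsSet_diagonal_eq_uniformity]
  exact Metric.uniformity_basis_dist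

lemma IsCompatMetric.exists_pos_forall_mem_le [CompactSpace X] (hd : IsCompatMetric d)
    {K : Set (X × X)} (hK : IsClosed K) (hdiag : ∀ x, (x, x) ∉ K) :
    ∃ ε > 0, ∀ p ∈ K, ε ≤ d p.1 p.2 := by
  have hmem : Kᶜ ∈ 𝓝ˢ (diagonal X) :=
    hK.isOpen_compl.mem_nhdsSet.2 fun p hp => by
      obtain ⟨x, y⟩ := p
      obtain rfl : x = y := hp
      exact hdiag x
  obtain ⟨ε, hε, hsub⟩ := hd.hasBasis_nhdsSet_diagonal.mem_iff.1 hmem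
  exact ⟨ε, hε, fun p hp => not_lt.1 fun hlt => hsub hlt hp⟩

lemma eventually_forall_mem_of_mem_uniformity {K : Type*} [PseudoMetricSpace K]
    {U : Set ((ℤ → K) × (ℤ → K))} (hU : U ∈ 𝓤 (ℤ → K)) :
    ∀ᶠ m : ℕ in atTop, ∀ x y : ℤ → K,
      (∀ i ∈ Icc (-m : ℤ) m, dist (x i) (y i) < 1 / (m + 1)) → (x, y) ∈ U := by
  rw [Pi.uniformity, mem_iInf'] at hU
  obtain ⟨s, hs, V, hV, -, rfl, -⟩ := hU
  have hcoord (i : ℤ) : ∀ᶠ m : ℕ in atTop, ∀ x y : ℤ → K,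
      (∀ i ∈ Icc (-m : ℤ) m, dist (x i) (y i) < 1 / (m + 1)) → (x, y) ∈ V i := by
    obtain ⟨W, hW, hWV⟩ := hV i
    obtain ⟨δ, hδ, hδW⟩ := Metric.mem_uniformity_dist.1 hW
    filter_upwards [eventually_ge_atTop i.natAbs,
      tendsto_one_div_add_atTop_nhds_zero_nat.eventually_lt_const hδ] with m him hmδ x y hxy
    exact hWV (hδW ((hxy i ⟨by omega, by omega⟩).trans hmδ))
  filter_upwards [(eventually_all_finite hs).2 fun i _ => hcoord i] with m hm x y hxy
  exact mem_iInter₂.2 fun i hi => hm i hi x y hxy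

lemma IsCompatMetric.exists_forall_le_of_forall_dist_lt {K : Type*} [PseudoMetricSpace K]
    [CompactSpace K] {d : (ℤ → K) → (ℤ → K) → ℝ} (hd : IsCompatMetric d) {ε : ℝ} (hε : 0 < ε) :
    ∃ m : ℕ, ∀ x y : ℤ → K,
      (∀ i ∈ Icc (-m : ℤ) m, dist (x i) (y i) < 1 / (m + 1)) → d x y < ε := by
  have hmem := hd.hasBasis_nhdsSet_diagonal.mem_of_mem hε
  rw [nhdsSet_diagonal_eq_uniformity] at hmem
  exact (eventually_forall_mem_of_mem_uniformity hmem).exists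

end CompatibleMetrics

section MeanDimension

variable {Y : Type*} {d : Y → Y → ℝ} {T : Y → Y} {n : ℕ} {x y : Y}

lemma dynDist_le {C : ℝ} (hC : 0 ≤ C) (h : ∀ i < n, d (T^[i] x) (T^[i] y) ≤ C) :
    dynDist d T n x y ≤ C := by
  refine Real.sSup_le ?_ hC
  rintro _ ⟨i, hi, rfl⟩
  exact h i hi

lemma le_dynDist {i : ℕ} (hi : i < n) : d (T^[i] x) (T^[i] y) ≤ dynDist d T n x y := by
  have hfin : {r | ∃ i < n, r = d (T^[i] x) (T^[i] y)}.Finite :=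
    ((finite_Iio n).image fun i => d (T^[i] x) (T^[i] y)).subset
      fun _ ⟨i, hi, hr⟩ => ⟨i, hi, hr.symm⟩
  exact le_csSup hfin.bddAbove ⟨i, hi, rfl⟩

lemma mdim_le_of_forall_widim_le {d : X → X → ℝ} {T : X → X} {a : ℝ≥0∞}
    (h : ∀ ε > 0, ∃ b ≠ ∞, ∀ n, (widim ε (dynDist d T n) : ℝ≥0∞) ≤ n * a + b) :
    mdim T d ≤ a := by
  refine iSup₂_le fun ε hε => ?_
  obtain ⟨b, hb, hwidim⟩ := h ε hε
  have hlim : Tendsto (fun n : ℕ => a + b * (n : ℝ≥0∞)⁻¹) atTop (nhds a) := by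
    simpa using tendsto_const_nhds.add
      (ENNReal.Tendsto.const_mul ENNReal.tendsto_inv_nat_nhds_zero (Or.inr hb))
  rw [← hlim.liminf_eq]
  refine liminf_le_liminf ?_
  filter_upwards [eventually_ne_atTop 0] with n hn
  have hn0 : (n : ℝ≥0∞) ≠ 0 := Nat.cast_ne_zero.2 hn
  calc
    (widim ε (dynDist d T n) : ℝ≥0∞) / n ≤ (n * a + b) / n := by gcongr; exact hwidim n
    _ = a + b * (n : ℝ≥0∞)⁻¹ := by
      rw [ENNReal.add_div, mul_comm, ENNReal.mul_div_cancel_right hn0 (ENNReal.natCast_ne_top n),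
        div_eq_mul_inv b]

lemma le_mdim_of_forall_le_widim {d : X → X → ℝ} {T : X → X} {a : ℝ≥0∞} {ε : ℝ} (hε : 0 < ε)
    (h : ∀ n : ℕ, n * a ≤ (widim ε (dynDist d T n) : ℝ≥0∞)) : a ≤ mdim T d := by
  refine le_iSup₂_of_le ε hε (le_liminf_of_le (by isBoundedDefault) ?_)
  filter_upwards [eventually_ne_atTop 0] with n hn
  rw [ENNReal.le_div_iff_mul_le (Or.inl (Nat.cast_ne_zero.2 hn))
    (Or.inl (ENNReal.natCast_ne_top n)), mul_comm]
  exact h n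

end MeanDimension

section FullShift

lemma shift_iterate_apply {K : Type*} (x : ℤ → K) (i : ℕ) (m : ℤ) :
    (shift K)^[i] x m = x (m + i) := by
  induction i generalizing m with
  | zero => simp
  | succ i ih => rw [Function.iterate_succ_apply', shift, ih]; push_cast; ring_nf

variable {ι : Type*} {d : (ℤ → ι → unitInterval) → (ℤ → ι → unitInterval) → ℝ}

/-- The point of the full shift that agrees with `x` at the times in `s` and is `0` elsewhere. -/
def extendByZero (s : Finset ℤ) (x : s × ι → unitInterval) : ℤ → ι → unitInterval :=
  fun m j => if hm : m ∈ s then x (⟨m, hm⟩, j) else 0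

lemma extendByZero_apply {s : Finset ℤ} (x : s × ι → unitInterval) (m : s) (j : ι) :
    extendByZero s x m j = x (m, j) :=
  dif_pos m.2

lemma continuous_extendByZero (s : Finset ℤ) : Continuous (extendByZero (ι := ι) s) := by
  refine continuous_pi fun m => continuous_pi fun j => ?_
  unfold extendByZero
  split_ifs <;> fun_prop

lemma IsCompatMetric.exists_pos_forall_opposite_faces_le [Finite ι]
    (hd : IsCompatMetric d) :
    ∃ ε > 0, ∀ x y j, x 0 j = 0 → y 0 j = 1 → ε ≤ d x y := by
  have hclosed (j : ι) : IsClosed {p : (ℤ → ι → unitInterval) × (ℤ → ι → unitInterval) |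
      p.1 0 j = 0 ∧ p.2 0 j = 1} :=
    (isClosed_eq (by fun_prop) continuous_const).inter (isClosed_eq (by fun_prop) continuous_const)
  obtain ⟨ε, hε, hfar⟩ := hd.exists_pos_forall_mem_le
    (isClosed_iUnion_of_finite hclosed) (fun x hx => by
      obtain ⟨j, h0, h1⟩ := mem_iUnion.1 hx
      exact zero_ne_one (h0.symm.trans h1))
  exact ⟨ε, hε, fun x y j h0 h1 => hfar (x, y) (mem_iUnion.2 ⟨j, h0, h1⟩)⟩

theorem card_le_mdim_shift [Fintype ι] (hd : IsCompatMetric d) :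
    (Fintype.card ι : ℝ≥0∞) ≤ mdim (shift (ι → unitInterval)) d := by
  obtain ⟨ε, hε, hfar⟩ := hd.exists_pos_forall_opposite_faces_le
  obtain ⟨C, hC⟩ := hd.exists_forall_le
  refine le_mdim_of_forall_le_widim hε fun n => ?_
  let E : (Finset.Ico (0 : ℤ) n × ι → unitInterval) → ℤ → ι → unitInterval := extendByZero _
  have hbound x y : dynDist d (shift (ι → unitInterval)) n x y ≤ max C 0 :=
    dynDist_le (le_max_right C 0) fun i _ => le_max_of_le_left (hC _ _)
  have hwidim := card_le_widim (E := E) (ε := ε) hbound (continuous_extendByZero _) ?_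
  · simpa [E] using ENat.toENNReal_mono hwidim
  rintro x y ⟨m, j⟩ hx hy
  obtain ⟨i, hi⟩ := Int.eq_ofNat_of_zero_le (Finset.mem_Ico.1 m.2).1
  have hcoord z : (shift (ι → unitInterval))^[i] (E z) 0 j = z (m, j) := by
    rw [shift_iterate_apply, zero_add, ← hi]
    exact extendByZero_apply z m j
  calc
    ε ≤ d ((shift (ι → unitInterval))^[i] (E x)) ((shift (ι → unitInterval))^[i] (E y)) :=
      hfar _ _ j ((hcoord x).trans hx) ((hcoord y).trans hy)
    _ ≤ dynDist d (shift (ι → unitInterval)) n (E x) (E y) :=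
      le_dynDist (by have := Finset.mem_Ico.1 m.2; omega)

lemma exists_forall_widim_dynDist_shift_le [Fintype ι] (hd : IsCompatMetric d) {ε : ℝ}
    (hε : 0 < ε) :
    ∃ m : ℕ, ∀ n, widim ε (dynDist d (shift (ι → unitInterval)) n) ≤
      ((n + 2 * m) * Fintype.card ι : ℕ) := by
  obtain ⟨m, hm⟩ := hd.exists_forall_le_of_forall_dist_lt (half_pos hε)
  refine ⟨m, fun n => ?_⟩
  let F (x : ℤ → ι → unitInterval) (c : Finset.Ico (-m : ℤ) (n + m) × ι) : ℝ :=
    2 * (m + 1) * x c.1 c.2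
  have hcard : Fintype.card (Finset.Ico (-m : ℤ) (n + m) × ι) =
      (n + 2 * m) * Fintype.card ι := by
    rw [Fintype.card_prod, Fintype.card_coe, Int.card_Ico]
    congr 1
    omega
  rw [← hcard]
  refine widim_le_card (half_pos hε).le (half_lt_self hε) (F := F) (by fun_prop) fun x y hxy => ?_
  refine dynDist_le (half_pos hε).le fun i hi => (hm _ _ fun k ⟨hkl, hku⟩ => ?_).le
  rw [shift_iterate_apply, shift_iterate_apply, dist_pi_lt_iff (by positivity)]
  intro j
  have hmem : k + i ∈ Finset.Ico (-m : ℤ) (n + m) := Finset.mem_Ico.2 ⟨by omega, by omega⟩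
  have hF := hxy (⟨k + i, hmem⟩, j)
  rw [← mul_sub, abs_mul, abs_of_pos (by positivity)] at hF
  rw [Subtype.dist_eq, Real.dist_eq, lt_div_iff₀ (by positivity)]
  linarith

theorem mdim_shift_le_card [Fintype ι] (hd : IsCompatMetric d) :
    mdim (shift (ι → unitInterval)) d ≤ Fintype.card ι := by
  refine mdim_le_of_forall_widim_le fun ε hε => ?_
  obtain ⟨m, hm⟩ := exists_forall_widim_dynDist_shift_le hd hε
  refine ⟨(2 * m * Fintype.card ι : ℕ), ENNReal.natCast_ne_top _, fun n => ?_⟩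
  calc
    (widim ε (dynDist d (shift (ι → unitInterval)) n) : ℝ≥0∞)
      ≤ ((n + 2 * m) * Fintype.card ι : ℕ) := by simpa using ENat.toENNReal_mono (hm n)
    _ = n * Fintype.card ι + (2 * m * Fintype.card ι : ℕ) := by push_cast; ring

end FullShift

/-- for every positive integer `D`, the full shift on the alphabet
`[0,1]^D` has mean dimension `D`. -/
theorem mdim_fullshift_cube (D : ℕ) (hD : 0 < D)
    (d : (ℤ → (Fin D → unitInterval)) → (ℤ → (Fin D → unitInterval)) → ℝ)
    (hd : IsCompatMetric d) :
    mdim (shift (Fin D → unitInterval)) d = (D : ℝ≥0∞) := by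
  refine le_antisymm ?_ ?_
  · simpa using mdim_shift_le_card hd
  · simpa using card_le_mdim_shift hd

end MeanDimPaper
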